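/- arXiv:0804.2722 — 3 statements merged into one kernel-verified Lean document; each statement's English description precedes it below -/
import Mathlib

section
/- Let ν : μ_{q+1} → ℂˣ be the unique group homomorphism of order exactly 2 (it exists and is unique since μ_{q+1} is cyclic of even order q+1). Then for each sign ε ∈ {+1, −1}, the ℂ-vector space W_ν^ε := {f : K × K → ℂ | f(λ⁻¹e₁, λ⁻¹e₂) = ν(λ)·f(e₁,e₂) for all λ ∈ μ_{q+1}, and f(e₁^q, e₂^q) = ε·f(e₁,e₂) for all (e₁,e₂) ∈ K × K} has dimension (q−1)(q²+1)/2 over ℂ. -/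
/-- The subspace `W_ν^ε` of functions on `K × K` transforming under the norm-one subgroup
`μ_{q+1} = rootsOfUnity (q+1) K` via the character `ν` (through inverses, as in the paper)
and on which the coordinatewise Frobenius acts by the sign `ε`. -/
noncomputable def Wnu (q : ℕ) (K : Type) [Field K]
    (ν : rootsOfUnity (q + 1) K →* ℂˣ) (ε : ℂ) : Submodule ℂ (K × K → ℂ) where
  carrier := {f | (∀ (l : rootsOfUnity (q + 1) K) (e₁ e₂ : K),
      f ((((l : Kˣ)⁻¹ : Kˣ) : K) * e₁, (((l : Kˣ)⁻¹ : Kˣ) : K) * e₂) = (ν l : ℂ) * f (e₁, e₂)) ∧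
    ∀ e₁ e₂ : K, f (e₁ ^ q, e₂ ^ q) = ε * f (e₁, e₂)}
  add_mem' := by
    rintro f g ⟨hf1, hf2⟩ ⟨hg1, hg2⟩
    exact ⟨fun l e₁ e₂ => by
        rw [Pi.add_apply, Pi.add_apply, hf1 l e₁ e₂, hg1 l e₁ e₂]; ring,
      fun e₁ e₂ => by rw [Pi.add_apply, Pi.add_apply, hf2 e₁ e₂, hg2 e₁ e₂]; ring⟩
  zero_mem' := ⟨fun l e₁ e₂ => by simp, fun e₁ e₂ => by simp⟩
  smul_mem' := by
    rintro c f ⟨hf1, hf2⟩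
    exact ⟨fun l e₁ e₂ => by
        rw [Pi.smul_apply, Pi.smul_apply, hf1 l e₁ e₂, smul_eq_mul, smul_eq_mul]; ring,
      fun e₁ e₂ => by rw [Pi.smul_apply, Pi.smul_apply, hf2 e₁ e₂, smul_eq_mul, smul_eq_mul]; ring⟩

/-!
Functions on `K × K` that transform under `μ_{q+1}` by `ν` are the invariants of a permutation
representation twisted by `ν`. Every nontrivial element of `μ_{q+1}` fixes only the origin, so the
character of that representation shows that they form a space of dimension
`(q ^ 4 - 1) / (q + 1)`. Since `ν = ν⁻¹`, the Frobenius acts on this space as an involution,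
whose eigenspaces are `W_ν^1` and `W_ν^{-1}`. These have the same dimension: by Hilbert 90 there
is `c ∈ Kˣ` with `ν (c / c ^ q) = -1`, and then `f ↦ f (c • ·)` exchanges them.
-/

open Module

section TwistedPermutationRepresentation

variable {R k G X : Type*} [CommRing R] [Field k] [Group G] [MulAction G X]

variable (X) in
/-- The permutation representation of `G` on functions on `X`, twisted by the inverse of the
character `χ`: the twist is chosen so that the invariants are the functions with
`f (g⁻¹ • x) = χ g * f x`. -/
noncomputable def twistedPermRep (χ : G →* Rˣ) : Representation R G (X → R) where
  toFun g := (χ g⁻¹ : R) • LinearMap.funLeft R R (g⁻¹ • · : X → X)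
  map_one' := by ext; simp [LinearMap.funLeft_apply]
  map_mul' g h := by
    refine LinearMap.ext fun f => funext fun x => ?_
    simp [LinearMap.funLeft_apply, mul_smul, mul_left_comm]

theorem mem_invariants_twistedPermRep {χ : G →* Rˣ} {f : X → R} :
    f ∈ (twistedPermRep X χ).invariants ↔ ∀ g x, f (g⁻¹ • x) = χ g * f x := by
  simp [twistedPermRep, funext_iff, LinearMap.funLeft_apply, Units.inv_mul_eq_iff_eq_mul]

theorem trace_funLeft [Finite X] (g : X → X) :
    LinearMap.trace R (X → R) (LinearMap.funLeft R R g) =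
      Nat.card (Function.fixedPoints g) := by
  classical
  have := Fintype.ofFinite X
  rw [LinearMap.trace_eq_matrix_trace R (Pi.basisFun R X), Matrix.trace]
  simp [LinearMap.funLeft_apply, Pi.single_apply, Function.mem_fixedPoints, Function.IsFixedPt,
    Fintype.card_subtype]

theorem character_twistedPermRep [Finite X] (χ : G →* kˣ) (g : G) :
    (twistedPermRep X χ).character g =
      (χ g : k)⁻¹ * Nat.card (MulAction.fixedBy X g) := by
  have fixedPoints_eq : Function.fixedPoints (g⁻¹ • · : X → X) = MulAction.fixedBy X g :=
    MulAction.fixedBy_inv X g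
  simp [twistedPermRep, Representation.character, trace_funLeft, fixedPoints_eq]

theorem card_mul_finrank_invariants_twistedPermRep_add [CharZero k] [Finite G] [Finite X]
    {χ : G →* kˣ} (hχ : χ ≠ 1) {m : ℕ}
    (hm : ∀ g : G, g ≠ 1 → Nat.card (MulAction.fixedBy X g) = m) :
    Nat.card G * finrank k (twistedPermRep X χ).invariants + m = Nat.card X := by
  classical
  have := Fintype.ofFinite G
  have hG : (Nat.card G : k) ≠ 0 := Nat.cast_ne_zero.2 Nat.card_pos.ne'
  have := invertibleOfNonzero hG
  have sum_χ : ∑ g, (χ g : k)⁻¹ = 0 := by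
    have hχ' : (Units.coeHom k).comp χ⁻¹ ≠ 1 := fun h =>
      hχ (inv_eq_one.1 (MonoidHom.ext fun g => Units.ext (DFunLike.congr_fun h g)))
    simpa using sum_hom_units_eq_zero _ hχ'
  have char_eq (g : G) : (twistedPermRep X χ).character g =
      (χ g : k)⁻¹ * m + if g = 1 then (Nat.card X - m : k) else 0 := by
    rw [character_twistedPermRep]
    split_ifs with hg
    · simp [hg]
    · rw [hm g hg, add_zero]
  have sum_char : ∑ g, (twistedPermRep X χ).character g = Nat.card X - m := by
    simp [char_eq, Finset.sum_add_distrib, ← Finset.sum_mul, sum_χ]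
  have key := Representation.card_inv_mul_sum_char_eq_finrank (twistedPermRep X χ)
  rw [sum_char, inv_mul_eq_iff_eq_mul₀ hG, sub_eq_iff_eq_add] at key
  exact_mod_cast key.symm

end TwistedPermutationRepresentation

theorem finrank_inf_eigenspace_one_add_finrank_inf_eigenspace_neg_one {k V : Type*} [Field k]
    [NeZero (2 : k)] [AddCommGroup V] [Module k V] [FiniteDimensional k V] {s : End k V}
    (hs : Function.Involutive s) {p : Submodule k V} (hp : p ≤ p.comap s) :
    finrank k ↥(p ⊓ s.eigenspace 1) + finrank k ↥(p ⊓ s.eigenspace (-1)) = finrank k p := by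
  have h2 : (2 : k) ≠ 0 := two_ne_zero
  have disj : (p ⊓ s.eigenspace 1) ⊓ (p ⊓ s.eigenspace (-1)) = ⊥ := by
    rw [← disjoint_iff]
    refine (End.disjoint_genEigenspace s (fun h => h2 ?_) 1 1).mono inf_le_right inf_le_right
    linear_combination h
  have sup : (p ⊓ s.eigenspace 1) ⊔ (p ⊓ s.eigenspace (-1)) = p := by
    refine le_antisymm (sup_le inf_le_left inf_le_left) fun v hv => ?_
    have hsv : s v ∈ p := hp hv
    rw [Submodule.mem_sup]
    refine ⟨(2⁻¹ : k) • (v + s v), ⟨p.smul_mem _ (p.add_mem hv hsv), ?_⟩,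
      (2⁻¹ : k) • (v - s v), ⟨p.smul_mem _ (p.sub_mem hv hsv), ?_⟩, ?_⟩
    · simp [hs v, add_comm]
    · simp [hs v, ← smul_neg]
    · rw [← smul_add, add_add_sub_cancel, ← two_smul k v, inv_smul_smul₀ h2]
  rw [← Submodule.finrank_sup_add_finrank_inf_eq, sup, disj, finrank_bot, add_zero]

section RootsOfUnity

theorem rootsOfUnity_pow_eq_inv {M : Type*} [CommMonoid M] {n : ℕ} (l : rootsOfUnity (n + 1) M) :
    l ^ n = l⁻¹ :=
  eq_inv_of_mul_eq_one_left (Subtype.ext ((pow_succ (l : Mˣ) n).symm.trans l.2))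

theorem range_powMonoidHom_eq_ker_powMonoidHom {G : Type*} [CommGroup G] [IsCyclic G] [Finite G]
    {a b : ℕ} (h : Nat.card G = a * b) :
    (powMonoidHom a : G →* G).range = (powMonoidHom b).ker := by
  refine Subgroup.eq_of_le_of_card_ge ?_ ?_
  · rintro _ ⟨g, rfl⟩
    rw [MonoidHom.mem_ker, powMonoidHom_apply, powMonoidHom_apply, ← pow_mul, ← h,
      pow_card_eq_one']
  · have ha : 0 < a := Nat.pos_of_mul_pos_right (h ▸ Nat.card_pos)
    rw [IsCyclic.card_powMonoidHom_ker, IsCyclic.card_powMonoidHom_range, h,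
      Nat.gcd_mul_left_left, Nat.gcd_mul_right_left, Nat.mul_div_cancel_left b ha]

theorem card_rootsOfUnity_of_dvd_card_units {K : Type*} [Field K] [Finite K] {n : ℕ}
    (hn : n ∣ Nat.card Kˣ) : Nat.card (rootsOfUnity n K) = n := by
  have : rootsOfUnity n K = (powMonoidHom n : Kˣ →* Kˣ).ker := rfl
  rw [this, IsCyclic.card_powMonoidHom_ker, Nat.gcd_eq_right hn]

theorem card_fixedBy_of_ne_one {K V : Type*} [DivisionRing K] [AddCommGroup V] [Module K V]
    {H : Subgroup Kˣ} {l : H} (hl : l ≠ 1) : Nat.card (MulAction.fixedBy V l) = 1 := by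
  have hl' : ((l : Kˣ) : K) - 1 ≠ 0 := sub_ne_zero.2 (by simpa using hl)
  have : MulAction.fixedBy V l = {0} := by
    ext v
    rw [MulAction.mem_fixedBy, Set.mem_singleton_iff, ← smul_eq_zero_iff_right hl', sub_smul,
      one_smul, sub_eq_zero]
    rfl
  simp [this]

end RootsOfUnity

section QuadraticExtension

variable {q : ℕ} {K : Type*} [Field K]

theorem card_units_of_card_eq_sq (hK : Nat.card K = q ^ 2) :
    Nat.card Kˣ = (q - 1) * (q + 1) := by
  rw [Nat.card_units, hK, mul_comm, ← Nat.sq_sub_sq, one_pow]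

theorem pow_involutive_of_card_eq_sq [Finite K] (hK : Nat.card K = q ^ 2) :
    Function.Involutive fun x : K => x ^ q := fun x => by
  have := Fintype.ofFinite K
  dsimp only
  rw [← pow_mul, ← sq, ← hK, Nat.card_eq_fintype_card, FiniteField.pow_card]

/-- Hilbert 90 for `K` over its subfield with `q` elements. -/
theorem exists_mul_pow_eq_of_rootsOfUnity [Finite K] (hK : Nat.card K = q ^ 2)
    (l : rootsOfUnity (q + 1) K) : ∃ c : Kˣ, (l : Kˣ) * c ^ q = c := by
  have hl : (l : Kˣ)⁻¹ ∈ (powMonoidHom (q - 1) : Kˣ →* Kˣ).range :=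
    range_powMonoidHom_eq_ker_powMonoidHom (card_units_of_card_eq_sq hK) ▸ l⁻¹.2
  obtain ⟨c, hc : c ^ (q - 1) = (l : Kˣ)⁻¹⟩ := hl
  have hq : q ≠ 0 := ne_zero_pow two_ne_zero (hK ▸ Nat.card_pos.ne')
  refine ⟨c, ?_⟩
  rw [← pow_sub_one_mul hq, hc, mul_inv_cancel_left]

end QuadraticExtension

section Wnu

variable {q : ℕ} {K : Type} [Field K] {ν : rootsOfUnity (q + 1) K →* ℂˣ} {ε : ℂ}

theorem mem_Wnu {f : K × K → ℂ} :
    f ∈ Wnu q K ν ε ↔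
      f ∈ (twistedPermRep (K × K) ν).invariants ∧ ∀ e, f (e ^ q) = ε * f e := by
  rw [mem_invariants_twistedPermRep]
  exact ⟨fun h => ⟨fun l e => h.1 l e.1 e.2, fun e => h.2 e.1 e.2⟩,
    fun h => ⟨fun l e₁ e₂ => h.1 l (e₁, e₂), fun e₁ e₂ => h.2 (e₁, e₂)⟩⟩

theorem Wnu_eq_invariants_inf_eigenspace :
    Wnu q K ν ε = (twistedPermRep (K × K) ν).invariants ⊓
      End.eigenspace (LinearMap.funLeft ℂ ℂ (· ^ q)) ε := by
  ext f
  simp [mem_Wnu, funext_iff, LinearMap.funLeft_apply]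

theorem comp_smul_mem_Wnu {f : K × K → ℂ} (hf : f ∈ Wnu q K ν ε) {l : rootsOfUnity (q + 1) K}
    {c : Kˣ} (hcq : (c ^ q) ^ q = c) (hc : l * c ^ q = c) :
    (fun e => f (c • e)) ∈ Wnu q K ν (ε * ν l) := by
  rw [mem_Wnu, mem_invariants_twistedPermRep] at hf ⊢
  obtain ⟨hν, hε⟩ := hf
  refine ⟨fun m e => ?_, fun e => ?_⟩
  · rw [smul_comm, hν]
  · have hcl : c ^ q • e = l⁻¹ • c • e := by
      rw [eq_inv_smul_iff, Subgroup.smul_def, smul_smul, hc]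
    calc f (c • e ^ q) = f ((c ^ q • e) ^ q) := by rw [smul_pow, hcq]
      _ = ε * ν l * f (c • e) := by rw [hε, hcl, hν, mul_assoc]

variable [Finite K]

theorem finrank_Wnu_le (hK : Nat.card K = q ^ 2) (l : rootsOfUnity (q + 1) K) :
    finrank ℂ (Wnu q K ν ε) ≤ finrank ℂ (Wnu q K ν (ε * ν l)) := by
  obtain ⟨c, hc⟩ := exists_mul_pow_eq_of_rootsOfUnity hK l
  have hcq : (c ^ q) ^ q = c := Units.ext (pow_involutive_of_card_eq_sq hK (c : K))
  have hinj : Function.Injective (LinearMap.funLeft ℂ ℂ (c • · : K × K → K × K)) :=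
    LinearMap.funLeft_injective_of_surjective ℂ ℂ _ (MulAction.surjective c)
  exact LinearMap.finrank_le_finrank_of_injective
    (f := (LinearMap.funLeft ℂ ℂ (c • ·)).restrict fun _ hf => comp_smul_mem_Wnu hf hcq hc)
    fun _ _ h => Subtype.ext (hinj (congrArg Subtype.val h))

theorem finrank_Wnu_neg (hK : Nat.card K = q ^ 2) (hν1 : ν ≠ 1) (hν2 : ∀ l, ν l * ν l = 1) :
    finrank ℂ (Wnu q K ν (-ε)) = finrank ℂ (Wnu q K ν ε) := by
  obtain ⟨l, hl⟩ : ∃ l, ν l ≠ 1 := by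
    contrapose! hν1
    exact MonoidHom.ext hν1
  have νl_eq : (ν l : ℂ) = -1 := by
    have h : (ν l : ℂ) * ν l = 1 := congrArg Units.val (hν2 l)
    exact (mul_self_eq_one_iff.1 h).resolve_left fun h => hl (Units.ext h)
  apply le_antisymm
  · exact (finrank_Wnu_le hK l).trans_eq (by rw [νl_eq, mul_neg_one, neg_neg])
  · exact (finrank_Wnu_le hK l).trans_eq (by rw [νl_eq, mul_neg_one])

theorem finrank_Wnu_one_add_finrank_Wnu_neg_one (hK : Nat.card K = q ^ 2)
    (hν2 : ∀ l, ν l * ν l = 1) :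
    finrank ℂ (Wnu q K ν 1) + finrank ℂ (Wnu q K ν (-1)) =
      finrank ℂ (twistedPermRep (K × K) ν).invariants := by
  rw [Wnu_eq_invariants_inf_eigenspace, Wnu_eq_invariants_inf_eigenspace]
  refine finrank_inf_eigenspace_one_add_finrank_inf_eigenspace_neg_one (fun f => ?_) fun f hf => ?_
  · have hpow := pow_involutive_of_card_eq_sq hK
    exact funext fun e => congrArg f (Prod.ext (hpow e.1) (hpow e.2))
  · rw [mem_invariants_twistedPermRep] at hf
    refine mem_invariants_twistedPermRep.2 fun l e => ?_
    have νl_inv : ν l⁻¹ = ν l := by rw [map_inv, inv_eq_of_mul_eq_one_left (hν2 l)]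
    calc f ((l⁻¹ • e) ^ q) = f (l⁻¹⁻¹ • e ^ q) := by rw [smul_pow, rootsOfUnity_pow_eq_inv]
      _ = ν l * f (e ^ q) := by rw [hf, νl_inv]

theorem finrank_invariants_twistedPermRep_rootsOfUnity (hK : Nat.card K = q ^ 2) (hν1 : ν ≠ 1) :
    finrank ℂ (twistedPermRep (K × K) ν).invariants = (q - 1) * (q ^ 2 + 1) := by
  have card_μ : Nat.card (rootsOfUnity (q + 1) K) = q + 1 :=
    card_rootsOfUnity_of_dvd_card_units ⟨q - 1, by rw [card_units_of_card_eq_sq hK, mul_comm]⟩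
  have key := card_mul_finrank_invariants_twistedPermRep_add (X := K × K) hν1 fun _ =>
    card_fixedBy_of_ne_one
  rw [card_μ, Nat.card_prod, hK] at key
  obtain ⟨r, rfl⟩ := Nat.exists_eq_add_one_of_ne_zero
    (ne_zero_pow two_ne_zero (hK ▸ Nat.card_pos.ne') : q ≠ 0)
  refine Nat.eq_of_mul_eq_mul_left (by lia : 0 < r + 1 + 1) (Nat.add_right_cancel (m := 1) ?_)
  rw [key, Nat.add_sub_cancel]
  ring

end Wnu

/-- Let `ν` be the unique character of `μ_{q+1}` of order exactly 2 (i.e. `ν ≠ 1` and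
`ν² = 1`).  For each sign `ε ∈ {1, -1}`, the space `W_ν^ε` has dimension `(q-1)(q²+1)/2`,
where `K` is a field with `q²` elements and `q` is an odd prime power. -/
theorem dim_Wnu (q : ℕ) (hq : ∃ p n : ℕ, p.Prime ∧ Odd p ∧ 0 < n ∧ q = p ^ n)
    (K : Type) [Field K] [Fintype K] (hK : Fintype.card K = q ^ 2)
    (ν : rootsOfUnity (q + 1) K →* ℂˣ) (hν1 : ν ≠ 1)
    (hν2 : ∀ x : rootsOfUnity (q + 1) K, ν x * ν x = 1)
    (ε : ℂ) (hε : ε = 1 ∨ ε = -1) :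
    Module.finrank ℂ (Wnu q K ν ε) = (q - 1) * (q ^ 2 + 1) / 2 := by
  have hK' : Nat.card K = q ^ 2 := Nat.card_eq_fintype_card.trans hK
  have hneg : finrank ℂ (Wnu q K ν (-1)) = finrank ℂ (Wnu q K ν 1) :=
    finrank_Wnu_neg hK' hν1 hν2
  have hsum := finrank_Wnu_one_add_finrank_Wnu_neg_one hK' hν2
  rw [finrank_invariants_twistedPermRep_rootsOfUnity hK' hν1] at hsum
  rcases hε with rfl | rfl <;> omega
end

section
/- Let k be a field, V a finite-dimensional k-vector space, B a nondegenerate alternating bilinear form on V, and L ⊆ V a Lagrangian subspace, i.e. L equals its B-orthogonal complement {v ∈ V : B(v, x) = 0 for all x ∈ L}. Let U be the set of linear automorphisms g of V such that B(gv, gw) = B(v, w) for all v, w ∈ V, g x = x for all x ∈ L, and gv − v ∈ L for all v ∈ V. Then U is a subgroup of the group of linear automorphisms of V, and the map Φ sending g ∈ U to the bilinear form on V/L defined by Φ(g)(v + L, w + L) = B(v, gw − w) is well defined and is a group isomorphism from U onto the additive group of symmetric bilinear forms on V/L. -/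
/-- The additive group (submodule) of symmetric bilinear forms on a vector space. -/
def symmBilinForms (k W : Type) [Field k] [AddCommGroup W] [Module k W] :
    Submodule k (W →ₗ[k] W →ₗ[k] k) where
  carrier := {Q | ∀ v w : W, Q v w = Q w v}
  add_mem' := by intro a b ha hb v w; simp [ha v w, hb v w]
  zero_mem' := by intro v w; simp
  smul_mem' := by intro c a ha v w; simp [ha v w]

/-!
An automorphism acting trivially on `L` and on `M ⧸ L` is `1 + n` for a unique linear map
`n : M ⧸ L → L`. Composition of automorphisms becomes addition of the maps `n`, because a composite
of two such maps, passing through `L`, is zero. When `L` is Lagrangian for a perfect pairing `B`,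
the form `B` identifies `L` with the dual of `M ⧸ L`, so `n` amounts to the bilinear form
`(v, w) ↦ B v (n w)` on `M ⧸ L`. For skew-symmetric `B`, the automorphism `1 + n` preserves `B`
exactly when this form is symmetric: in the expansion of `B (v + n v) (w + n w)` the quadratic term
vanishes because `L` is isotropic, and the linear terms are `B v (n w) - B w (n v)`.
-/

section Shear

variable {R M : Type*} [Ring R] [AddCommGroup M] [Module R M] (L : Submodule R M)

/-- The group of shears along `L`: the linear automorphisms of `M` that act trivially on `L` and
on `M ⧸ L`. -/
def shearGroup : Subgroup (M ≃ₗ[R] M) where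
  carrier := {g | (∀ x ∈ L, g x = x) ∧ ∀ v, g v - v ∈ L}
  one_mem' := by simp
  mul_mem' := by
    rintro g h ⟨hgL, hgM⟩ ⟨hhL, hhM⟩
    refine ⟨fun x hx => ?_, fun v => ?_⟩
    · rw [LinearEquiv.mul_apply, hhL x hx, hgL x hx]
    · rw [LinearEquiv.mul_apply, ← sub_add_sub_cancel _ (h v)]
      exact add_mem (hgM _) (hhM v)
  inv_mem' := by
    rintro g ⟨hgL, hgM⟩
    have hinv (v : M) : g (g⁻¹ v) = v := g.apply_symm_apply v
    refine ⟨fun x hx => g.injective ?_, fun v => ?_⟩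
    · rw [hinv, hgL x hx]
    · rw [← neg_sub]
      simpa only [hinv] using neg_mem (hgM (g⁻¹ v))

/-- The shear `v ↦ v + n (v + L)` attached to a linear map `n : M ⧸ L → L`. -/
def shear (n : M ⧸ L →ₗ[R] L) : M ≃ₗ[R] M :=
  LinearEquiv.ofLinearMap (LinearMap.id + L.subtype ∘ₗ n ∘ₗ L.mkQ)
    (LinearMap.id - L.subtype ∘ₗ n ∘ₗ L.mkQ)
    (by ext; simp [(Submodule.Quotient.mk_eq_zero L).mpr])
    (by ext; simp [(Submodule.Quotient.mk_eq_zero L).mpr])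

variable {L}

@[simp]
theorem shear_apply (n : M ⧸ L →ₗ[R] L) (v : M) :
    shear L n v = v + n (Submodule.Quotient.mk v) :=
  rfl

theorem shear_mem_shearGroup (n : M ⧸ L →ₗ[R] L) : shear L n ∈ shearGroup L :=
  ⟨fun x hx => by simp [(Submodule.Quotient.mk_eq_zero L).mpr hx], fun v => by simp⟩

theorem shear_add (n m : M ⧸ L →ₗ[R] L) : shear L (n + m) = shear L n * shear L m := by
  ext v
  simp [(Submodule.Quotient.mk_eq_zero L).mpr, add_comm, add_left_comm]

/-- The linear map `v + L ↦ g v - v` from `M ⧸ L` to `L` attached to a shear `g` along `L`. -/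
def displacement (g : shearGroup L) : M ⧸ L →ₗ[R] L :=
  L.liftQ ((g.1.toLinearMap - LinearMap.id).codRestrict L g.2.2) fun x hx =>
    Subtype.ext (sub_eq_zero.mpr (g.2.1 x hx))

@[simp]
theorem coe_displacement_mk (g : shearGroup L) (v : M) :
    (displacement g (Submodule.Quotient.mk v) : M) = g.1 v - v :=
  rfl

variable (L) in
/-- Shears along `L` correspond to linear maps `M ⧸ L → L`. -/
def shearGroupEquivHom : shearGroup L ≃* Multiplicative (M ⧸ L →ₗ[R] L) :=
  MulEquiv.symm
    { toFun n := ⟨shear L n.toAdd, shear_mem_shearGroup n.toAdd⟩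
      invFun g := .ofAdd (displacement g)
      left_inv n := by
        refine Multiplicative.toAdd.injective (LinearMap.ext fun v => Subtype.ext ?_)
        obtain ⟨v, rfl⟩ := Submodule.Quotient.mk_surjective L v
        simp
      right_inv g := by ext v; simp
      map_mul' n m := Subtype.ext (shear_add n.toAdd m.toAdd) }

end Shear

theorem isPerfPair_of_isRefl_of_separatingLeft {k V : Type*} [Field k] [AddCommGroup V]
    [Module k V] [FiniteDimensional k V] {B : V →ₗ[k] V →ₗ[k] k} (hB : B.IsRefl)
    (hsep : B.SeparatingLeft) : B.IsPerfPair :=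
  have hker := LinearMap.separatingLeft_iff_ker_eq_bot.mp hsep
  .of_injective (LinearMap.ker_eq_bot.mp hker)
    (LinearMap.ker_eq_bot.mp (hB.ker_flip_eq_bot hker))

section Form

variable {R M : Type*} [CommRing R] [AddCommGroup M] [Module R M]

theorem map_toPerfPair_flip_orthogonalBilin (B : M →ₗ[R] M →ₗ[R] R) [B.IsPerfPair]
    (L : Submodule R M) :
    (L.orthogonalBilin B).map (B.flip.toPerfPair : M →ₗ[R] Module.Dual R M) =
      L.dualAnnihilator := by
  ext f
  rw [Submodule.mem_map_equiv, Submodule.mem_orthogonalBilin_iff, Submodule.mem_dualAnnihilator]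
  simp only [LinearMap.apply_toPerfPair_flip]

variable (B : M →ₗ[R] M →ₗ[R] R) [B.IsPerfPair] {L : Submodule R M}

/-- The identification `x ↦ B (·, x)` of a Lagrangian submodule `L` with the dual of `M ⧸ L`. -/
noncomputable def lagrangianEquivDual (hL : L.orthogonalBilin B = L) :
    L ≃ₗ[R] Module.Dual R (M ⧸ L) :=
  (B.flip.toPerfPair.ofSubmodules L L.dualAnnihilator
      (by rw [← map_toPerfPair_flip_orthogonalBilin B L, hL])).trans
    L.dualQuotEquivDualAnnihilator.symm

theorem lagrangianEquivDual_apply_mk (hL : L.orthogonalBilin B = L) (x : L) (v : M) :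
    lagrangianEquivDual B hL x (Submodule.Quotient.mk v) = B v x :=
  rfl

/-- Shears along a Lagrangian submodule `L` correspond to bilinear forms on `M ⧸ L`, a shear `g`
giving the form `(v + L, w + L) ↦ B v (g w - w)`. -/
noncomputable def shearGroupEquivForm (hL : L.orthogonalBilin B = L) :
    shearGroup L ≃* Multiplicative (LinearMap.BilinForm R (M ⧸ L)) :=
  (shearGroupEquivHom L).trans
    ((lagrangianEquivDual B hL).congrRight.trans LinearMap.lflip).toAddEquiv.toMultiplicative

theorem shearGroupEquivForm_apply_mk (hL : L.orthogonalBilin B = L) (g : shearGroup L) (v w : M) :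
    (shearGroupEquivForm B hL g).toAdd (Submodule.Quotient.mk v) (Submodule.Quotient.mk w) =
      B v (g.1 w - w) :=
  lagrangianEquivDual_apply_mk B hL (displacement g (Submodule.Quotient.mk w)) v

end Form

section Isometry

variable {R M : Type*} [CommRing R] [AddCommGroup M] [Module R M] (B : M →ₗ[R] M →ₗ[R] R)

/-- The group of linear automorphisms of `M` that preserve `B`. -/
def isometryGroup : Subgroup (M ≃ₗ[R] M) where
  carrier := {g | B.IsOrthogonal g}
  one_mem' _ _ := rfl
  mul_mem' hg hh v w := (hg _ _).trans (hh v w)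
  inv_mem' {g} hg v w := by
    have hinv (v : M) : g (g⁻¹ v) = v := g.apply_symm_apply v
    rw [← hg, hinv, hinv]

/-- The unipotent radical of the stabilizer of a Lagrangian submodule `L` in the isometry group
of `B`: the isometries acting trivially on `L` and on `M ⧸ L`. -/
def unipotentRadical (L : Submodule R M) : Subgroup (M ≃ₗ[R] M) :=
  isometryGroup B ⊓ shearGroup L

variable (R M) in
/-- The symmetric bilinear forms on a module over a commutative ring; over a field this is
`symmBilinForms`. -/
def symmetricForms : Submodule R (LinearMap.BilinForm R M) where
  carrier := {Q | ∀ v w, Q v w = Q w v}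
  add_mem' hP hQ v w := congrArg₂ (· + ·) (hP v w) (hQ v w)
  zero_mem' _ _ := rfl
  smul_mem' c _ hQ v w := congrArg (c • ·) (hQ v w)

theorem mem_symmetricForms {Q : LinearMap.BilinForm R M} :
    Q ∈ symmetricForms R M ↔ ∀ v w, Q v w = Q w v :=
  Iff.rfl

variable {B} {L : Submodule R M}

theorem unipotentRadical_le_shearGroup : unipotentRadical B L ≤ shearGroup L :=
  inf_le_right

theorem isOrthogonal_iff_apply_sub_comm (hB : ∀ v w, -B v w = B w v)
    (hL : ∀ x ∈ L, ∀ y ∈ L, B x y = 0) {g : M ≃ₗ[R] M} (hg : ∀ v, g v - v ∈ L) :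
    B.IsOrthogonal g ↔ ∀ v w, B v (g w - w) = B w (g v - v) := by
  refine forall₂_congr fun v w => ?_
  have hexpand : B (g v) (g w) = B v w + (B v (g w - w) - B w (g v - v)) := by
    have hquad := hL _ (hg v) _ (hg w)
    have hskew := hB w (g v - v)
    simp only [map_sub, LinearMap.sub_apply] at hquad hskew ⊢
    linear_combination hquad - hskew
  rw [hexpand, add_eq_left, sub_eq_zero]

theorem mem_unipotentRadical_iff_shearGroupEquivForm_mem [B.IsPerfPair]
    (hB : ∀ v w, -B v w = B w v) (hL : L.orthogonalBilin B = L) (g : shearGroup L) :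
    g.1 ∈ unipotentRadical B L ↔
      (shearGroupEquivForm B hL g).toAdd ∈ symmetricForms R (M ⧸ L) := by
  have hiso : ∀ x ∈ L, ∀ y ∈ L, B x y = 0 := fun x hx y hy => (hL.ge hy) x hx
  calc g.1 ∈ unipotentRadical B L
    _ ↔ B.IsOrthogonal g.1 := and_iff_left g.2
    _ ↔ ∀ v w, B v (g.1 w - w) = B w (g.1 v - v) :=
      isOrthogonal_iff_apply_sub_comm hB hiso g.2.2
    _ ↔ (shearGroupEquivForm B hL g).toAdd ∈ symmetricForms R (M ⧸ L) := by
      simp only [mem_symmetricForms, Submodule.Quotient.forall, shearGroupEquivForm_apply_mk]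

/-- The isomorphism `g ↦ ((v + L, w + L) ↦ B v (g w - w))` from the unipotent radical onto the
symmetric bilinear forms on `M ⧸ L`. -/
noncomputable def unipotentRadicalEquivSymmetricForms [B.IsPerfPair]
    (hB : ∀ v w, -B v w = B w v) (hL : L.orthogonalBilin B = L) :
    unipotentRadical B L ≃* Multiplicative (symmetricForms R (M ⧸ L)) where
  toFun g := .ofAdd
    ⟨(shearGroupEquivForm B hL (Subgroup.inclusion unipotentRadical_le_shearGroup g)).toAdd,
      (mem_unipotentRadical_iff_shearGroupEquivForm_mem hB hL _).mp g.2⟩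
  invFun Q := ⟨(shearGroupEquivForm B hL).symm (.ofAdd Q.toAdd.1),
    (mem_unipotentRadical_iff_shearGroupEquivForm_mem hB hL _).mpr <| by simp⟩
  left_inv g := by simp
  right_inv Q := by simp [Subgroup.inclusion]
  map_mul' g h := by simp only [map_mul, toAdd_mul]; rfl

end Isometry

theorem unipotentRadical_iso_symmForms_general {R M : Type*} [CommRing R] [AddCommGroup M]
    [Module R M] (B : M →ₗ[R] M →ₗ[R] R) [B.IsPerfPair] (hB : ∀ v w, -B v w = B w v)
    (L : Submodule R M) (hL : ∀ v, v ∈ L ↔ ∀ x ∈ L, B v x = 0) :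
    ∃ H : Subgroup (M ≃ₗ[R] M),
      (∀ g : M ≃ₗ[R] M, g ∈ H ↔
        ((∀ v w, B (g v) (g w) = B v w) ∧ (∀ x ∈ L, g x = x) ∧ ∀ v, g v - v ∈ L)) ∧
      ∃ Φ : H ≃* Multiplicative (symmetricForms R (M ⧸ L)),
        ∀ (g : H) (v w : M),
          (Multiplicative.toAdd (Φ g)).val
              (Submodule.Quotient.mk v) (Submodule.Quotient.mk w)
            = B v ((g : M ≃ₗ[R] M) w - w) := by
  have hL' : L.orthogonalBilin B = L := by
    ext v
    simp only [hL v, Submodule.mem_orthogonalBilin_iff, ← hB v, neg_eq_zero]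
  exact ⟨unipotentRadical B L, fun _ => Iff.rfl, unipotentRadicalEquivSymmetricForms hB hL',
    fun g => shearGroupEquivForm_apply_mk B hL' ⟨g, g.2.2⟩⟩

/-- Let `B` be a nondegenerate alternating bilinear form on a finite-dimensional vector
space `V` over a field `k`, and let `L ⊆ V` be a Lagrangian subspace
(`L = {v | B(v, x) = 0 ∀ x ∈ L}`).  The set `U` of linear automorphisms `g` of `V`
preserving `B`, fixing `L` pointwise, and with `g v - v ∈ L` for all `v`, is a subgroup of
the group of linear automorphisms of `V`; and the map `Φ` sending `g` to the bilinear form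
`(v + L, w + L) ↦ B(v, g w - w)` on `V/L` is well defined and is a group isomorphism from
`U` onto the additive group of symmetric bilinear forms on `V/L`. -/
theorem unipotentRadical_iso_symmForms (k : Type) [Field k]
    (V : Type) [AddCommGroup V] [Module k V] [FiniteDimensional k V]
    (B : V →ₗ[k] V →ₗ[k] k)
    (halt : ∀ v : V, B v v = 0)
    (hnd : ∀ v : V, (∀ w : V, B v w = 0) → v = 0)
    (L : Submodule k V)
    (hL : ∀ v : V, v ∈ L ↔ ∀ x ∈ L, B v x = 0) :
    ∃ H : Subgroup (V ≃ₗ[k] V),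
      (∀ g : V ≃ₗ[k] V, g ∈ H ↔
        ((∀ v w : V, B (g v) (g w) = B v w) ∧ (∀ x ∈ L, g x = x) ∧ ∀ v : V, g v - v ∈ L)) ∧
      ∃ Φ : H ≃* Multiplicative (symmBilinForms k (V ⧸ L)),
        ∀ (g : H) (v w : V),
          (Multiplicative.toAdd (Φ g)).val
              (Submodule.Quotient.mk v) (Submodule.Quotient.mk w)
            = B v ((g : V ≃ₗ[k] V) w - w) := by
  have := isPerfPair_of_isRefl_of_separatingLeft (LinearMap.IsAlt.isRefl halt) hnd
  exact unipotentRadical_iso_symmForms_general B (LinearMap.IsAlt.neg halt) L hL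
end

section
/- Let ψ be a nontrivial homomorphism from the additive group of F_q to ℂˣ. Suppose f : K × K → ℂ satisfies: (i) f(λe₁, λe₂) = f(e₁,e₂) for all λ ∈ μ_{q+1}; (ii) f(e₁^q, e₂^q) = −f(e₁,e₂) for all (e₁,e₂); and (iii) ψ(c·e₂^{q+1})·f(e₁,e₂) = f(e₁,e₂) for all c ∈ F_q and all (e₁,e₂) ∈ K × K (note that e₂^{q+1} lies in the subfield F_q). Then f = 0. -/
/-!
Let `σ` be an involution of `K`, which is `x ↦ x ^ q` when `K` has `q ^ 2` elements, with norm
`x ↦ σ x * x`. Off the axis `e₂ = 0` the norm of `e₂` is an invertible fixed point of `σ`, so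
`c * (σ e₂ * e₂)` takes every value fixed by `σ`, in particular one where `ψ ≠ 1`, and `f` must
vanish. On the axis, `σ x = (σ x / x) * x` with `σ x / x` of norm one, as in the easy direction of
Hilbert 90; hence `f` is both invariant and anti-invariant under `σ`.
-/

section GroupWithZero

variable {K : Type*} [GroupWithZero K] {σ : K →*₀ K}

theorem map_div_self_mul_div_self_eq_one (hσ : Function.Involutive σ) {x : K} (hx : x ≠ 0) :
    σ (σ x / x) * (σ x / x) = 1 := by
  have hσx : σ x ≠ 0 := (map_ne_zero σ).2 hx
  rw [map_div₀, hσ x, div_mul_div_cancel₀ hσx, div_self hx]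

theorem apply_map_eq_of_norm_one_invariant {α : Type*} (hσ : Function.Involutive σ) {g : K → α}
    (hg : ∀ l x, σ l * l = 1 → g (l * x) = g x) (x : K) : g (σ x) = g x := by
  obtain rfl | hx := eq_or_ne x 0
  · rw [map_zero]
  · simpa only [div_mul_cancel₀ _ hx] using
      hg (σ x / x) x (map_div_self_mul_div_self_eq_one hσ hx)

end GroupWithZero

section CommGroupWithZero

variable {K : Type*} [CommGroupWithZero K] {σ : K →*₀ K}

theorem map_map_mul_self (hσ : Function.Involutive σ) (x : K) : σ (σ x * x) = σ x * x := by
  rw [map_mul, hσ x, mul_comm]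

theorem exists_fixed_mul_norm_eq (hσ : Function.Involutive σ) {a x : K} (ha : σ a = a)
    (hx : x ≠ 0) : ∃ c, σ c = c ∧ c * (σ x * x) = a := by
  have hnorm : σ x * x ≠ 0 := mul_ne_zero ((map_ne_zero σ).2 hx) hx
  refine ⟨a / (σ x * x), ?_, div_mul_cancel₀ a hnorm⟩
  rw [map_div₀, ha, map_map_mul_self hσ]

end CommGroupWithZero

section Module

variable {R M : Type*} [Ring R] [IsDomain R] [AddCommGroup M] [Module R M]
  [Module.IsTorsionFree R M]

theorem eq_zero_of_smul_eq_self {r : R} (hr : r ≠ 1) {m : M} (h : r • m = m) : m = 0 := by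
  by_contra hm
  exact hr (smul_left_injective R hm (h.trans (one_smul R m).symm))

variable (R) in
theorem eq_zero_of_eq_neg [NeZero (2 : R)] {m : M} (h : m = -m) : m = 0 := by
  have htwo : (2 : R) • m = 0 := by rw [two_smul, ← eq_neg_iff_add_eq_zero, ← h]
  exact (smul_eq_zero_iff_right two_ne_zero).1 htwo

theorem WoneMinus_no_fixed_vector_general [NeZero (2 : R)] {K : Type*} [CommGroupWithZero K]
    {σ : K →*₀ K} (hσ : Function.Involutive σ) {ψ : K → R} (hψ : ∃ a, σ a = a ∧ ψ a ≠ 1)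
    {f : K × K → M}
    (hunit : ∀ l e₁ e₂, σ l * l = 1 → f (l * e₁, l * e₂) = f (e₁, e₂))
    (hanti : ∀ e₁ e₂, f (σ e₁, σ e₂) = -f (e₁, e₂))
    (hψf : ∀ c e₁ e₂, σ c = c → ψ (c * (σ e₂ * e₂)) • f (e₁, e₂) = f (e₁, e₂)) :
    f = 0 := by
  funext ⟨e₁, e₂⟩
  obtain rfl | he₂ := eq_or_ne e₂ 0
  · have haxis : f (σ e₁, 0) = f (e₁, 0) :=
      apply_map_eq_of_norm_one_invariant hσ (g := fun x ↦ f (x, 0))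
        (fun l x hl ↦ by simpa only [mul_zero] using hunit l x 0 hl) e₁
    have hneg : f (σ e₁, 0) = -f (e₁, 0) := by simpa only [map_zero] using hanti e₁ 0
    exact eq_zero_of_eq_neg R (haxis.symm.trans hneg)
  · obtain ⟨a, ha, hψa⟩ := hψ
    obtain ⟨c, hc, rfl⟩ := exists_fixed_mul_norm_eq hσ ha he₂
    exact eq_zero_of_smul_eq_self hψa (hψf c e₁ e₂ hc)

end Module

theorem involutive_pow_of_card_eq_sq {K : Type*} [GroupWithZero K] [Fintype K] {q : ℕ}
    (hK : Fintype.card K = q ^ 2) : Function.Involutive fun x : K ↦ x ^ q := fun x ↦ by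
  beta_reduce
  rw [← pow_mul, ← sq, ← hK, FiniteField.pow_card]

/-- Let `K` be a field with `q²` elements (`q` an odd prime power) and let `ψ` be a
nontrivial (ℂˣ-valued) character of the additive group of the subfield
`F_q = {x ∈ K | x^q = x}`.  If `f : K × K → ℂ` is invariant under the norm-one subgroup
`μ_{q+1}`, anti-invariant under the coordinatewise Frobenius, and satisfies
`ψ(c · e₂^(q+1)) f(e₁, e₂) = f(e₁, e₂)` for all `c ∈ F_q`, then `f = 0`. -/
theorem WoneMinus_no_fixed_vector (q : ℕ)
    (hq : ∃ p n : ℕ, p.Prime ∧ Odd p ∧ 0 < n ∧ q = p ^ n)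
    (K : Type) [Field K] [Fintype K] (hK : Fintype.card K = q ^ 2)
    (ψ : K → ℂ)
    (hψmul : ∀ a b : K, a ^ q = a → b ^ q = b → ψ (a + b) = ψ a * ψ b)
    (hψne : ∀ a : K, a ^ q = a → ψ a ≠ 0)
    (hψnontriv : ∃ a : K, a ^ q = a ∧ ψ a ≠ 1)
    (f : K × K → ℂ)
    (h1 : ∀ l e₁ e₂ : K, l ^ (q + 1) = 1 → f (l * e₁, l * e₂) = f (e₁, e₂))
    (h2 : ∀ e₁ e₂ : K, f (e₁ ^ q, e₂ ^ q) = - f (e₁, e₂))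
    (h3 : ∀ c e₁ e₂ : K, c ^ q = c → ψ (c * e₂ ^ (q + 1)) * f (e₁, e₂) = f (e₁, e₂)) :
    f = 0 := by
  have hq0 : q ≠ 0 := by
    rintro rfl
    exact Fintype.card_ne_zero hK
  exact WoneMinus_no_fixed_vector_general (σ := powMonoidWithZeroHom hq0)
    (involutive_pow_of_card_eq_sq hK) hψnontriv
    (by simpa [← pow_succ] using h1) h2 (by simpa [← pow_succ] using h3)
end
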